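/- Let Γ = ℤ^d and K̃ → K a free simplicial Γ-cover of a finite complex. Let Γ ⊇ Γ₁ ⊇ Γ₂ ⊇ … be finite-index subgroups with ⋂ Γ_i = {0}, and X_i = K̃/Γ_i. Then b_E^p(K) = lim_{i→∞} dim_{𝔽₂} H^p(X_i, 𝔽₂) / [Γ : Γ_i]. (Approximation of entropy Betti numbers by finite covers.) -/

import Mathlib

open Filter Topology Pointwise

instance : TopologicalSpace (ZMod 2) := ⊥
instance : DiscreteTopology (ZMod 2) := ⟨rfl⟩

variable {G : Type*} [Group G] [DecidableEq G]

/-- Left translation action on functions. -/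
def ltv (M : Type*) (γ : G) (f : G → M) : G → M := fun δ => f (γ⁻¹ * δ)

/-- A `Γ`-invariant linear subspace. -/
def InvariantSub (M : Type*) [AddCommGroup M] [Module (ZMod 2) M]
    (W : Submodule (ZMod 2) (G → M)) : Prop :=
  ∀ γ : G, ∀ f ∈ W, ltv M γ f ∈ W

/-- The space of restrictions of elements of `W` to `Λ`. -/
noncomputable def resSpace {M : Type*} [AddCommGroup M] [Module (ZMod 2) M]
    (W : Submodule (ZMod 2) (G → M)) (Λ : Finset G) :
    Submodule (ZMod 2) (↥Λ → M) :=
  W.map (LinearMap.funLeft (ZMod 2) M (Subtype.val : ↥Λ → G))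

/-- The entropy of a `Γ`-invariant linear subspace, along a Følner exhaustion. -/
noncomputable def entropy {M : Type*} [AddCommGroup M] [Module (ZMod 2) M]
    (F : ℕ → Finset G) (W : Submodule (ZMod 2) (G → M)) : ℝ :=
  Filter.limsup
    (fun n => (Module.finrank (ZMod 2) ↥(resSpace W (F n)) : ℝ) / (F n).card) atTop

/-- `S` is a finite symmetric generating set containing `1`. -/
def SymmGen (S : Finset G) : Prop :=
  (1 : G) ∈ S ∧ (∀ s ∈ S, s⁻¹ ∈ S) ∧ Subgroup.closure (S : Set G) = ⊤

/-- A Følner exhaustion with respect to the word metric of `S`: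
`S ^ r * F n` is the `r`-neighbourhood of `F n`. -/
structure FolnerSeq (S : Finset G) (F : ℕ → Finset G) : Prop where
  one_mem : (1 : G) ∈ F 0
  mono : Monotone F
  exhaust : ∀ g : G, ∃ n, g ∈ F n
  folner : ∀ r : ℕ,
    Tendsto (fun n => (((S ^ r * F n) \ F n).card : ℝ) / (F n).card) atTop (𝓝 0)

variable (F : ℕ → Finset G)

/-- The `p`-th entropy Betti number of an equivariant cochain complex
`(Γ → 𝔽₂)^{k 0} → (Γ → 𝔽₂)^{k 1} → …`:
`b_E^p = h_Γ(Ker d_p) − h_Γ(Im d_{p−1})` (with `Im d_{−1} = 0`). -/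
noncomputable def bE
    (k : ℕ → ℕ)
    (d : ∀ p : ℕ, (G → Fin (k p) → ZMod 2) →ₗ[ZMod 2] (G → Fin (k (p + 1)) → ZMod 2))
    (p : ℕ) : ℝ :=
  entropy F (LinearMap.ker (d p)) -
    (match p with
     | 0 => 0
     | q + 1 => entropy F (LinearMap.range (d q)))

/-- The submodule of functions fixed by the left translation action of a subgroup `H`. -/
def fixSub (M : Type*) [AddCommGroup M] [Module (ZMod 2) M] (H : Subgroup G) :
    Submodule (ZMod 2) (G → M) :=
  ⨅ (γ : G) (_ : γ ∈ H),
    LinearMap.ker ((LinearMap.funLeft (ZMod 2) M fun δ => γ⁻¹ * δ) - LinearMap.id)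

/-!
Restricting a differential `d` to the `Γ_i`-fixed cochains gives
`dim (ker d ∩ Fix Γ_i) + dim d (Fix Γ_i) = dim Fix Γ_i = dim M * [Γ : Γ_i]`, so the two normalized
dimensions add up to exactly `dim M`. Once a Følner set `F n` injects into `Γ ⧸ Γ_i`, covering
`Γ ⧸ Γ_i` evenly by translates of `F n` bounds each of them by the density of `ker d`, respectively
of `range d`, in the window `F n`. Since `d f` on `F n` only depends on `f` on `F n * E` for a fixed
finite `E`, these two densities add up to at most `dim M` plus a Følner error. Each upper bound
is therefore a lower bound for the other term, and both terms converge to the entropies.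
-/

section LinearAlgebra

variable {K V U W : Type*} [Field K] [AddCommGroup V] [Module K V] [AddCommGroup U] [Module K U]
  [AddCommGroup W] [Module K W]

theorem finrank_map_ker_add_finrank_range [FiniteDimensional K U] {f : V →ₗ[K] U} {g : V →ₗ[K] W}
    (hf : Function.Surjective f) (hfg : LinearMap.ker f ≤ LinearMap.ker g) :
    Module.finrank K ((LinearMap.ker g).map f) + Module.finrank K (LinearMap.range g) =
      Module.finrank K U := by
  obtain ⟨s, hs⟩ := f.exists_rightInverse_of_surjective (LinearMap.range_eq_top.2 hf)
  have hgs (v : V) : g (s (f v)) = g v := by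
    rw [← sub_eq_zero, ← map_sub]
    exact hfg (by simp [show f (s (f v)) = f v from LinearMap.congr_fun hs (f v)])
  have hker : LinearMap.ker (g ∘ₗ s) = (LinearMap.ker g).map f := by
    ext u
    constructor
    · exact fun hu ↦ ⟨s u, hu, LinearMap.congr_fun hs u⟩
    · rintro ⟨v, hv, rfl⟩
      exact (hgs v).trans hv
  have hrange : LinearMap.range (g ∘ₗ s) = LinearMap.range g :=
    le_antisymm (LinearMap.range_comp_le_range s g) <| by
      rintro _ ⟨v, rfl⟩
      exact ⟨f v, hgs v⟩
  rw [← hker, ← hrange, add_comm, LinearMap.finrank_range_add_finrank_ker]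

theorem finrank_ker_inf_add_finrank_map (f : V →ₗ[K] W) (P : Submodule K V)
    [FiniteDimensional K P] :
    Module.finrank K ↥(LinearMap.ker f ⊓ P) + Module.finrank K (P.map f) = Module.finrank K P := by
  have hker : Module.finrank K (LinearMap.ker (f.domRestrict P)) =
      Module.finrank K ↥(LinearMap.ker f ⊓ P) := by
    rw [LinearMap.ker_domRestrict, inf_comm, ← Submodule.map_comap_subtype,
      Submodule.finrank_map_subtype_eq]
  rw [← hker, ← LinearMap.range_domRestrict, add_comm, LinearMap.finrank_range_add_finrank_ker]

/-- A linear form of Shearer's inequality: pick a basis of the span among the `v x`; each basis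
vector is counted by at least `m` of the `s q`, and those in `s q` are independent in its span. -/
theorem mul_finrank_span_range_le_sum_finrank_span_image [FiniteDimensional K V] {X Q : Type*}
    [Fintype Q] (v : X → V) (s : Q → Set X) [∀ q, DecidablePred (· ∈ s q)] {m : ℕ}
    (hm : ∀ x, m ≤ Finset.card {q | x ∈ s q}) :
    m * Module.finrank K (Submodule.span K (Set.range v)) ≤
      ∑ q, Module.finrank K (Submodule.span K (v '' s q)) := by
  obtain ⟨κ, c, -, hspan, hli⟩ := exists_linearIndependent' K v
  have : Finite κ := hli.finite
  have : Fintype κ := Fintype.ofFinite κ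
  have hbasis (q : Q) : Finset.card {t | c t ∈ s q} ≤
      Module.finrank K (Submodule.span K (v '' s q)) := by
    rw [← Fintype.card_subtype,
      ← finrank_span_eq_card (hli.comp (Subtype.val : {t // c t ∈ s q} → κ) Subtype.val_injective)]
    refine Submodule.finrank_mono (Submodule.span_mono ?_)
    rintro _ ⟨t, rfl⟩
    exact ⟨c t, t.2, rfl⟩
  calc m * Module.finrank K (Submodule.span K (Set.range v))
      = ∑ _t : κ, m := by rw [← hspan, finrank_span_eq_card hli]; simp [mul_comm]
    _ ≤ ∑ t, Finset.card {q | c t ∈ s q} := Finset.sum_le_sum fun t _ ↦ hm (c t)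
    _ = ∑ q, Finset.card {t | c t ∈ s q} :=
      Finset.sum_card_bipartiteAbove_eq_sum_card_bipartiteBelow fun t q ↦ c t ∈ s q
    _ ≤ ∑ q, Module.finrank K (Submodule.span K (v '' s q)) :=
      Finset.sum_le_sum fun q _ ↦ hbasis q

end LinearAlgebra

section Squeeze

theorem tendsto_limsup_of_eventually_le_of_eventually_sub_le {ι β : Type*} {l : Filter ι}
    {l' : Filter β} [NeBot l'] {x : ι → ℝ} {u ε : β → ℝ} (hε : Tendsto ε l' (𝓝 0))
    (hle : ∀ n, ∀ᶠ i in l, x i ≤ u n) (hge : ∀ n, ∀ᶠ i in l, u n - ε n ≤ x i) :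
    Tendsto x l (𝓝 (limsup u l')) := by
  rcases l.eq_or_neBot with rfl | _
  · exact tendsto_bot
  have : Nonempty β := l'.nonempty_of_neBot
  have hcompare (m n : β) : u m - ε m ≤ u n := by
    obtain ⟨i, hi_ge, hi_le⟩ := ((hge m).and (hle n)).exists
    exact hi_ge.trans hi_le
  have hinf_le (n : β) : ⨅ m, u m ≤ u n :=
    ciInf_le ⟨u n - ε n, Set.forall_mem_range.2 (hcompare n)⟩ n
  have hle_inf (n : β) : u n - ε n ≤ ⨅ m, u m := le_ciInf (hcompare n)
  have hu : Tendsto u l' (𝓝 (⨅ m, u m)) := by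
    refine tendsto_of_tendsto_of_tendsto_of_le_of_le tendsto_const_nhds
      (h := fun n ↦ (⨅ m, u m) + ε n) ?_ hinf_le fun n ↦ sub_le_iff_le_add.1 (hle_inf n)
    simpa using hε.const_add (⨅ m, u m)
  rw [hu.limsup_eq]
  refine tendsto_order.2 ⟨fun a ha ↦ ?_, fun a ha ↦ ?_⟩
  · obtain ⟨n, hn⟩ := (hε.eventually (gt_mem_nhds (sub_pos.2 ha))).exists
    filter_upwards [hge n] with i hi
    linarith [hinf_le n]
  · obtain ⟨n, hn⟩ := (hu.eventually (gt_mem_nhds ha)).exists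
    filter_upwards [hle n] with i hi using hi.trans_lt hn

end Squeeze

section FixedFunctions

variable {Γ M N : Type*} [Group Γ] [AddCommGroup M] [Module (ZMod 2) M]
  [AddCommGroup N] [Module (ZMod 2) N]

theorem mem_fixSub_iff {H : Subgroup Γ} {f : Γ → M} :
    f ∈ fixSub M H ↔ ∀ γ ∈ H, ltv M γ f = f := by
  simp only [fixSub, Submodule.mem_iInf, LinearMap.mem_ker, LinearMap.sub_apply, sub_eq_zero]
  rfl

theorem fixSub_eq_range_funLeft_mk (H : Subgroup Γ) [H.Normal] :
    fixSub M H = LinearMap.range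
      (LinearMap.funLeft (ZMod 2) M (QuotientGroup.mk : Γ → Γ ⧸ H)) := by
  ext f
  constructor
  · intro hf
    refine ⟨fun q ↦ f q.out, funext fun x ↦ ?_⟩
    have hx : x / (x : Γ ⧸ H).out ∈ H := QuotientGroup.eq_iff_div_mem.1 (by simp)
    simpa [ltv] using congrFun (mem_fixSub_iff.1 hf _ hx) x
  · rintro ⟨g, rfl⟩
    refine mem_fixSub_iff.2 fun γ hγ ↦ funext fun x ↦ ?_
    simp [ltv, LinearMap.funLeft_apply, (QuotientGroup.eq_one_iff γ).2 hγ]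

theorem apply_eq_of_mem_fixSub {H : Subgroup Γ} [H.Normal] {f : Γ → M} (hf : f ∈ fixSub M H)
    {x y : Γ} (hxy : (x : Γ ⧸ H) = y) : f x = f y := by
  rw [fixSub_eq_range_funLeft_mk] at hf
  obtain ⟨g, rfl⟩ := hf
  exact congrArg g hxy

instance finite_fixSub [Module.Finite (ZMod 2) M] (H : Subgroup Γ) [H.Normal] [H.FiniteIndex] :
    Module.Finite (ZMod 2) (fixSub M H) := by
  rw [fixSub_eq_range_funLeft_mk]
  infer_instance

theorem finrank_fixSub [Module.Finite (ZMod 2) M] (H : Subgroup Γ) [H.Normal] [H.FiniteIndex] :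
    Module.finrank (ZMod 2) (fixSub M H) = Module.finrank (ZMod 2) M * H.index := by
  have := Fintype.ofFinite (Γ ⧸ H)
  rw [fixSub_eq_range_funLeft_mk, LinearMap.finrank_range_of_inj
    (LinearMap.funLeft_injective_of_surjective _ _ _ QuotientGroup.mk_surjective),
    Module.finrank_pi_fintype]
  simp [Subgroup.index_eq_card, mul_comm]

theorem invariantSub_fixSub (H : Subgroup Γ) [hH : H.Normal] : InvariantSub M (fixSub M H) := by
  intro γ f hf
  refine mem_fixSub_iff.2 fun η hη ↦ funext fun x ↦ apply_eq_of_mem_fixSub hf ?_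
  simp [(QuotientGroup.eq_one_iff η).2 hη]

theorem InvariantSub.ker_inf {P : Submodule (ZMod 2) (Γ → M)} (hP : InvariantSub M P)
    {d : (Γ → M) →ₗ[ZMod 2] (Γ → N)} (hequi : ∀ γ f, d (ltv M γ f) = ltv N γ (d f)) :
    InvariantSub M (LinearMap.ker d ⊓ P) := by
  rintro γ f ⟨hf, hfP⟩
  refine ⟨?_, hP γ f hfP⟩
  rw [SetLike.mem_coe, LinearMap.mem_ker] at hf ⊢
  rw [hequi, hf]
  rfl

theorem InvariantSub.map {P : Submodule (ZMod 2) (Γ → M)} (hP : InvariantSub M P)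
    {d : (Γ → M) →ₗ[ZMod 2] (Γ → N)} (hequi : ∀ γ f, d (ltv M γ f) = ltv N γ (d f)) :
    InvariantSub N (P.map d) := by
  rintro γ _ ⟨f, hf, rfl⟩
  exact ⟨_, hP γ f hf, hequi γ f⟩

theorem map_fixSub_le_fixSub {d : (Γ → M) →ₗ[ZMod 2] (Γ → N)}
    (hequi : ∀ γ f, d (ltv M γ f) = ltv N γ (d f)) (H : Subgroup Γ) :
    (fixSub M H).map d ≤ fixSub N H := by
  rintro _ ⟨f, hf, rfl⟩
  exact mem_fixSub_iff.2 fun γ hγ ↦ by rw [← hequi, mem_fixSub_iff.1 hf γ hγ]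

theorem finrank_ker_inf_fixSub_div_add_finrank_map_fixSub_div [Module.Finite (ZMod 2) M]
    (d : (Γ → M) →ₗ[ZMod 2] (Γ → N)) (H : Subgroup Γ) [H.Normal] [H.FiniteIndex] :
    (Module.finrank (ZMod 2) ↥(LinearMap.ker d ⊓ fixSub M H) : ℝ) / H.index +
      (Module.finrank (ZMod 2) ((fixSub M H).map d) : ℝ) / H.index =
      Module.finrank (ZMod 2) M := by
  rw [← add_div, div_eq_iff (Nat.cast_ne_zero.2 Subgroup.FiniteIndex.index_ne_zero)]
  exact_mod_cast (finrank_ker_inf_add_finrank_map d (fixSub M H)).trans (finrank_fixSub H)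

end FixedFunctions

section Windows

variable {Γ M N : Type*} [AddCommGroup M] [Module (ZMod 2) M] [AddCommGroup N] [Module (ZMod 2) N]

theorem finrank_resSpace_mono [Module.Finite (ZMod 2) M] {W W' : Submodule (ZMod 2) (Γ → M)}
    {B C : Finset Γ} (hW : W ≤ W') (hBC : B ⊆ C) :
    Module.finrank (ZMod 2) (resSpace W B) ≤ Module.finrank (ZMod 2) (resSpace W' C) := by
  have hrestrict : resSpace W B = (resSpace W C).map
      (LinearMap.funLeft (ZMod 2) M (Set.inclusion (Finset.coe_subset.2 hBC))) := by
    rw [resSpace, resSpace, ← Submodule.map_comp]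
    rfl
  calc Module.finrank (ZMod 2) (resSpace W B)
      ≤ Module.finrank (ZMod 2) (resSpace W C) := by
        rw [hrestrict]; exact Submodule.finrank_map_le _ _
    _ ≤ Module.finrank (ZMod 2) (resSpace W' C) := Submodule.finrank_mono (Submodule.map_mono hW)

theorem InvariantSub.finrank_resSpace_smul_le [Group Γ] [DecidableEq Γ] [Module.Finite (ZMod 2) M]
    {W : Submodule (ZMod 2) (Γ → M)} (hW : InvariantSub M W) (g : Γ) (B : Finset Γ) :
    Module.finrank (ZMod 2) (resSpace W (g • B)) ≤ Module.finrank (ZMod 2) (resSpace W B) := by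
  let τ (x : ↥(g • B)) : B := ⟨g⁻¹ * x, Finset.inv_smul_mem_iff.2 x.2⟩
  have hτ : resSpace W (g • B) ≤ (resSpace W B).map (LinearMap.funLeft (ZMod 2) M τ) := by
    rintro _ ⟨f, hf, rfl⟩
    refine ⟨_, ⟨ltv M g⁻¹ f, hW g⁻¹ f hf, rfl⟩, funext fun x ↦ ?_⟩
    simp [ltv, τ, LinearMap.funLeft_apply]
  exact (Submodule.finrank_mono hτ).trans (Submodule.finrank_map_le _ _)

/-- The coordinate functionals `f ↦ φ (f x)` on a space `W` of `M`-valued functions. -/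
def coordinate (W : Submodule (ZMod 2) (Γ → M)) (a : Γ × Module.Dual (ZMod 2) M) :
    Module.Dual (ZMod 2) W :=
  a.2 ∘ₗ LinearMap.proj a.1 ∘ₗ W.subtype

theorem span_range_coordinate (W : Submodule (ZMod 2) (Γ → M)) [Module.Finite (ZMod 2) W] :
    Submodule.span (ZMod 2) (Set.range (coordinate W)) = ⊤ := by
  refine Submodule.span_eq_top_of_ne_zero fun f hf ↦ ?_
  obtain ⟨x, hx⟩ := Function.ne_iff.1 (Subtype.coe_ne_coe.2 hf)
  obtain ⟨φ, hφ⟩ := Module.Projective.exists_dual_ne_zero (ZMod 2) hx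
  exact ⟨coordinate W (x, φ), ⟨_, rfl⟩, hφ⟩

theorem finrank_span_coordinate_le_finrank_resSpace [Module.Finite (ZMod 2) M]
    (W : Submodule (ZMod 2) (Γ → M)) (B : Finset Γ) :
    Module.finrank (ZMod 2) (Submodule.span (ZMod 2) (coordinate W '' {a | a.1 ∈ B})) ≤
      Module.finrank (ZMod 2) (resSpace W B) := by
  let ρ := (LinearMap.funLeft (ZMod 2) M (Subtype.val : B → Γ)).domRestrict W
  have hspan : Submodule.span (ZMod 2) (coordinate W '' {a | a.1 ∈ B}) ≤
      LinearMap.range ρ.dualMap := by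
    rw [Submodule.span_le]
    rintro _ ⟨⟨x, φ⟩, hx, rfl⟩
    exact ⟨φ ∘ₗ LinearMap.proj (⟨x, hx⟩ : B), rfl⟩
  calc _ ≤ Module.finrank (ZMod 2) (LinearMap.range ρ.dualMap) := Submodule.finrank_mono hspan
    _ = Module.finrank (ZMod 2) (resSpace W B) := by
      rw [LinearMap.finrank_range_dualMap_eq_finrank_range, LinearMap.range_domRestrict, resSpace]

end Windows

section UpperBound

variable {Γ M : Type*} [Group Γ] [AddCommGroup M] [Module (ZMod 2) M] [Module.Finite (ZMod 2) M]
  {H : Subgroup Γ} [H.Normal] [H.FiniteIndex] {P : Submodule (ZMod 2) (Γ → M)} {B : Finset Γ}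

theorem card_filter_inv_mul_mem {Q : Type*} [Group Q] [Fintype Q] [DecidableEq Q] (C : Finset Q)
    (x : Q) : Finset.card {q | q⁻¹ * x ∈ C} = C.card :=
  Finset.card_equiv ((Equiv.inv Q).trans (Equiv.mulRight x)) (by simp)

/-- Elements of `P` live on the finite group `Γ ⧸ H`, whose translates of the image of `B` cover
each point `#B` times; restricted to each of these translates, `P` has the same dimension. -/
theorem InvariantSub.card_mul_finrank_le_index_mul_finrank_resSpace (hP : InvariantSub M P)
    (hPH : P ≤ fixSub M H) (hB : Set.InjOn (QuotientGroup.mk : Γ → Γ ⧸ H) B) :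
    B.card * Module.finrank (ZMod 2) P ≤
      H.index * Module.finrank (ZMod 2) (resSpace P B) := by
  classical
  have := Fintype.ofFinite (Γ ⧸ H)
  have : Module.Finite (ZMod 2) P := Submodule.finiteDimensional_of_le hPH
  let C : Finset (Γ ⧸ H) := B.image QuotientGroup.mk
  let s (q : Γ ⧸ H) : Set (Γ × Module.Dual (ZMod 2) M) := {a | q⁻¹ * a.1 ∈ C}
  have hcover (a : Γ × Module.Dual (ZMod 2) M) : Finset.card {q | a ∈ s q} = B.card :=
    (card_filter_inv_mul_mem C (a.1 : Γ ⧸ H)).trans (Finset.card_image_of_injOn hB)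
  have htranslate (q : Γ ⧸ H) :
      Module.finrank (ZMod 2) (Submodule.span (ZMod 2) (coordinate P '' s q)) ≤
        Module.finrank (ZMod 2) (resSpace P B) := by
    obtain ⟨g, rfl⟩ := QuotientGroup.mk_surjective q
    have himage : coordinate P '' s g ⊆ coordinate P '' {a | a.1 ∈ g • B} := by
      rintro _ ⟨⟨x, φ⟩, hx, rfl⟩
      obtain ⟨b, hb, hbx⟩ := Finset.mem_image.1 hx
      have hgb : g * b ∈ g • B := Finset.smul_mem_smul_finset hb
      refine ⟨(g * b, φ), hgb, LinearMap.ext fun f ↦ ?_⟩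
      exact congrArg φ (apply_eq_of_mem_fixSub (hPH f.2) (by simp [hbx]))
    exact (Submodule.finrank_mono (Submodule.span_mono himage)).trans <|
      (finrank_span_coordinate_le_finrank_resSpace P (g • B)).trans
        (hP.finrank_resSpace_smul_le g B)
  calc B.card * Module.finrank (ZMod 2) P
      = B.card * Module.finrank (ZMod 2)
          (Submodule.span (ZMod 2) (Set.range (coordinate P))) := by
        rw [span_range_coordinate, finrank_top, Subspace.dual_finrank_eq]
    _ ≤ ∑ q, Module.finrank (ZMod 2) (Submodule.span (ZMod 2) (coordinate P '' s q)) :=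
      mul_finrank_span_range_le_sum_finrank_span_image _ s fun a ↦ (hcover a).ge
    _ ≤ ∑ _q : Γ ⧸ H, Module.finrank (ZMod 2) (resSpace P B) :=
      Finset.sum_le_sum fun q _ ↦ htranslate q
    _ = H.index * Module.finrank (ZMod 2) (resSpace P B) := by simp [Subgroup.index_eq_card]

theorem InvariantSub.finrank_div_index_le_finrank_resSpace_div_card (hP : InvariantSub M P)
    (hPH : P ≤ fixSub M H) (hB : Set.InjOn (QuotientGroup.mk : Γ → Γ ⧸ H) B) (hne : B.Nonempty)
    {W : Submodule (ZMod 2) (Γ → M)} (hPW : P ≤ W) :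
    (Module.finrank (ZMod 2) P : ℝ) / H.index ≤
      (Module.finrank (ZMod 2) (resSpace W B) : ℝ) / B.card := by
  have hcard : (0 : ℝ) < B.card := Nat.cast_pos.2 hne.card_pos
  have hindex : (0 : ℝ) < H.index :=
    Nat.cast_pos.2 (Nat.pos_of_ne_zero Subgroup.FiniteIndex.index_ne_zero)
  rw [div_le_div_iff₀ hindex hcard, mul_comm, mul_comm _ (H.index : ℝ)]
  exact_mod_cast (hP.card_mul_finrank_le_index_mul_finrank_resSpace hPH hB).trans
    (Nat.mul_le_mul_left _ (finrank_resSpace_mono hPW subset_rfl))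

end UpperBound

section MemorySets

variable {Γ M N : Type*} [Group Γ] [AddCommGroup M] [Module (ZMod 2) M]
  [AddCommGroup N] [Module (ZMod 2) N]

/-- `E` is a memory set of the linear cellular automaton `d`: the value of `d f` at `g` is
determined by the restriction of `f` to `g * E`. -/
def IsMemorySet (d : (Γ → M) →ₗ[ZMod 2] (Γ → N)) (E : Finset Γ) : Prop :=
  ∀ f g, (∀ e ∈ E, f (g * e) = 0) → d f g = 0

theorem exists_isMemorySet [TopologicalSpace M] [TopologicalSpace N] [DiscreteTopology N]
    {d : (Γ → M) →ₗ[ZMod 2] (Γ → N)} (hd : Continuous d)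
    (hequi : ∀ γ f, d (ltv M γ f) = ltv N γ (d f)) : ∃ E, 1 ∈ E ∧ IsMemorySet d E := by
  classical
  have hopen : IsOpen {f | d f 1 = 0} :=
    (isOpen_discrete ({0} : Set N)).preimage ((continuous_apply 1).comp hd)
  obtain ⟨E, u, hu, hE⟩ := isOpen_pi_iff.1 hopen 0 (by simp)
  refine ⟨insert 1 E, Finset.mem_insert_self 1 E, fun f g hf ↦ ?_⟩
  have hmem : ltv M g⁻¹ f ∈ {f | d f 1 = 0} := hE fun e he ↦ by
    have hfe : ltv M g⁻¹ f e = 0 := by simpa [ltv] using hf e (Finset.mem_insert_of_mem he)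
    rw [hfe]
    exact (hu e he).2
  have hzero : d (ltv M g⁻¹ f) 1 = 0 := hmem
  simpa [hequi, ltv] using hzero

variable [DecidableEq Γ] [Module.Finite (ZMod 2) M] {d : (Γ → M) →ₗ[ZMod 2] (Γ → N)}
  {E B : Finset Γ}

theorem IsMemorySet.finrank_resSpace_ker_add_finrank_resSpace_range_le (hE : IsMemorySet d E)
    (h1 : 1 ∈ E) :
    Module.finrank (ZMod 2) (resSpace (LinearMap.ker d) B) +
      Module.finrank (ZMod 2) (resSpace (LinearMap.range d) B) ≤
      Module.finrank (ZMod 2) M * (B * E).card := by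
  let ρ := LinearMap.funLeft (ZMod 2) M (Subtype.val : ↥(B * E) → Γ)
  let σ := LinearMap.funLeft (ZMod 2) N (Subtype.val : B → Γ)
  have hlocal : LinearMap.ker ρ ≤ LinearMap.ker (σ ∘ₗ d) := fun f hf ↦ funext fun b ↦
    hE f b fun e he ↦ congrFun hf ⟨b * e, Finset.mul_mem_mul b.2 he⟩
  have hker : resSpace (LinearMap.ker d) (B * E) ≤ (LinearMap.ker (σ ∘ₗ d)).map ρ :=
    Submodule.map_mono (LinearMap.ker_le_ker_comp d σ)
  calc _ ≤ Module.finrank (ZMod 2) ((LinearMap.ker (σ ∘ₗ d)).map ρ) +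
          Module.finrank (ZMod 2) (LinearMap.range (σ ∘ₗ d)) := by
        rw [resSpace.eq_1 (LinearMap.range d), ← LinearMap.range_comp]
        gcongr
        exact (finrank_resSpace_mono le_rfl (Finset.subset_mul_left B h1)).trans
          (Submodule.finrank_mono hker)
    _ = Module.finrank (ZMod 2) (↥(B * E) → M) := finrank_map_ker_add_finrank_range
        (LinearMap.funLeft_surjective_of_injective _ _ _ Subtype.val_injective) hlocal
    _ = Module.finrank (ZMod 2) M * (B * E).card := by
        rw [Module.finrank_pi_fintype]
        simp [mul_comm]

theorem IsMemorySet.finrank_resSpace_ker_div_add_finrank_resSpace_range_div_le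
    (hE : IsMemorySet d E) (h1 : 1 ∈ E) (hne : B.Nonempty) :
    (Module.finrank (ZMod 2) (resSpace (LinearMap.ker d) B) : ℝ) / B.card +
      (Module.finrank (ZMod 2) (resSpace (LinearMap.range d) B) : ℝ) / B.card ≤
      Module.finrank (ZMod 2) M + Module.finrank (ZMod 2) M *
        ((((B * E) \ B).card : ℝ) / B.card) := by
  have hcard : (0 : ℝ) < B.card := Nat.cast_pos.2 hne.card_pos
  have hdim := hE.finrank_resSpace_ker_add_finrank_resSpace_range_le (B := B) h1
  rw [← Finset.card_sdiff_add_card_eq_card (Finset.subset_mul_left B h1)] at hdim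
  rw [← add_div, div_le_iff₀ hcard]
  calc _ ≤ (Module.finrank (ZMod 2) M : ℝ) * (((B * E) \ B).card + B.card) := by
        exact_mod_cast hdim
    _ = _ := by field_simp; ring

end MemorySets

section Folner

variable {Γ : Type*} [DecidableEq Γ]

/-- A right Følner sequence of nonempty finite sets: `F n * E` is asymptotically no larger than
`F n` for each finite `E`. The translations are on the right because left-equivariant maps read off
`d f` on `F n` from `f` on some `F n * E`. -/
structure IsRightFolner [Group Γ] (F : ℕ → Finset Γ) : Prop where
  nonempty : ∀ n, (F n).Nonempty
  tendsto_card_mul_sdiff_div : ∀ E : Finset Γ,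
    Tendsto (fun n ↦ (((F n * E) \ F n).card : ℝ) / (F n).card) atTop (𝓝 0)

theorem SymmGen.exists_mem_pow [Group Γ] {S : Finset Γ} (hS : SymmGen S) (x : Γ) :
    ∃ r : ℕ, x ∈ S ^ r := by
  have hx : x ∈ Subgroup.closure (S : Set Γ) := hS.2.2 ▸ Subgroup.mem_top x
  induction hx using Subgroup.closure_induction_left with
  | one => exact ⟨0, by simp⟩
  | mul_left s hs y _ ih =>
    obtain ⟨r, hr⟩ := ih
    exact ⟨r + 1, pow_succ' S r ▸ Finset.mul_mem_mul hs hr⟩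
  | inv_mul_cancel s hs y _ ih =>
    obtain ⟨r, hr⟩ := ih
    exact ⟨r + 1, pow_succ' S r ▸ Finset.mul_mem_mul (hS.2.1 s hs) hr⟩

theorem SymmGen.exists_subset_pow [Group Γ] {S : Finset Γ} (hS : SymmGen S) (E : Finset Γ) :
    ∃ r : ℕ, E ⊆ S ^ r := by
  choose r hr using hS.exists_mem_pow
  exact ⟨E.sup r, fun x hx ↦ Finset.pow_right_monotone hS.1 (Finset.le_sup hx) (hr x)⟩

theorem FolnerSeq.isRightFolner [CommGroup Γ] {S : Finset Γ} {F : ℕ → Finset Γ} (hS : SymmGen S)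
    (hF : FolnerSeq S F) : IsRightFolner F where
  nonempty n := ⟨1, hF.mono n.zero_le hF.one_mem⟩
  tendsto_card_mul_sdiff_div E := by
    obtain ⟨r, hr⟩ := hS.exists_subset_pow E
    refine squeeze_zero (fun n ↦ by positivity) (fun n ↦ ?_) (hF.folner r)
    rw [mul_comm (F n) E]
    gcongr

end Folner

section Approximation

variable {Γ : Type*} [Group Γ]

theorem eventually_notMem_of_antitone_of_iInf_eq_bot {ι : Type*} [Preorder ι] {H : ι → Subgroup Γ}
    (hH : Antitone H) (hbot : ⨅ i, H i = ⊥) {g : Γ} (hg : g ≠ 1) : ∀ᶠ i in atTop, g ∉ H i := by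
  obtain ⟨i, hi⟩ : ∃ i, g ∉ H i := by
    by_contra! hmem
    exact hg (Subgroup.mem_bot.1 (hbot ▸ Subgroup.mem_iInf.2 hmem))
  filter_upwards [eventually_ge_atTop i] with j hij using fun hj ↦ hi (hH hij hj)

variable {ι : Type*} {l : Filter ι} {H : ι → Subgroup Γ}

theorem eventually_injOn_mk (hH : ∀ g ≠ 1, ∀ᶠ i in l, g ∉ H i) (B : Finset Γ) :
    ∀ᶠ i in l, Set.InjOn (QuotientGroup.mk : Γ → Γ ⧸ H i) B := by
  have hsep : ∀ᶠ i in l, ∀ x ∈ B, ∀ y ∈ B, x ≠ y → x⁻¹ * y ∉ H i := by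
    simp only [eventually_all_finset]
    intro x _ y _
    by_cases hxy : x = y
    · simp [hxy]
    · filter_upwards [hH (x⁻¹ * y) (inv_mul_eq_one.not.2 hxy)] with i hi _ using hi
  filter_upwards [hsep] with i hi x hx y hy hxy
  exact not_imp_not.1 (hi x hx y hy) (QuotientGroup.eq.1 hxy)

variable [DecidableEq Γ] [∀ i, (H i).Normal] [∀ i, (H i).FiniteIndex] {F : ℕ → Finset Γ}

theorem tendsto_finrank_ker_and_map_div_index {M N : Type*} [AddCommGroup M] [Module (ZMod 2) M]
    [Module.Finite (ZMod 2) M] [TopologicalSpace M] [AddCommGroup N] [Module (ZMod 2) N]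
    [Module.Finite (ZMod 2) N] [TopologicalSpace N] [DiscreteTopology N]
    (hF : IsRightFolner F) (hH : ∀ g ≠ 1, ∀ᶠ i in l, g ∉ H i)
    {d : (Γ → M) →ₗ[ZMod 2] (Γ → N)} (hd : Continuous d)
    (hequi : ∀ γ f, d (ltv M γ f) = ltv N γ (d f)) :
    Tendsto (fun i ↦ (Module.finrank (ZMod 2) ↥(LinearMap.ker d ⊓ fixSub M (H i)) : ℝ) /
        (H i).index) l (𝓝 (entropy F (LinearMap.ker d))) ∧
      Tendsto (fun i ↦ (Module.finrank (ZMod 2) ((fixSub M (H i)).map d) : ℝ) / (H i).index) l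
        (𝓝 (entropy F (LinearMap.range d))) := by
  obtain ⟨E, h1, hE⟩ := exists_isMemorySet hd hequi
  have hε := (hF.tendsto_card_mul_sdiff_div E).const_mul (Module.finrank (ZMod 2) M : ℝ)
  rw [mul_zero] at hε
  have hwindow n := hE.finrank_resSpace_ker_div_add_finrank_resSpace_range_div_le h1 (hF.nonempty n)
  have hcover (i : ι) := finrank_ker_inf_fixSub_div_add_finrank_map_fixSub_div d (H i)
  have hker (n : ℕ) := (eventually_injOn_mk hH (F n)).mono fun i hi ↦
    ((invariantSub_fixSub (H i)).ker_inf hequi).finrank_div_index_le_finrank_resSpace_div_card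
      inf_le_right hi (hF.nonempty n) inf_le_left
  have hmap (n : ℕ) := (eventually_injOn_mk hH (F n)).mono fun i hi ↦
    ((invariantSub_fixSub (H i)).map hequi).finrank_div_index_le_finrank_resSpace_div_card
      (map_fixSub_le_fixSub hequi (H i)) hi (hF.nonempty n) LinearMap.map_le_range
  constructor
  · refine tendsto_limsup_of_eventually_le_of_eventually_sub_le hε hker fun n ↦ ?_
    filter_upwards [hmap n] with i hi
    linarith [hcover i, hwindow n]
  · refine tendsto_limsup_of_eventually_le_of_eventually_sub_le hε hmap fun n ↦ ?_
    filter_upwards [hker n] with i hi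
    linarith [hcover i, hwindow n]

theorem betti_approx_finite_covers_general (hF : IsRightFolner F)
    (hH : ∀ g ≠ 1, ∀ᶠ i in l, g ∉ H i) (k : ℕ → ℕ)
    (d : ∀ p : ℕ, (Γ → Fin (k p) → ZMod 2) →ₗ[ZMod 2] (Γ → Fin (k (p + 1)) → ZMod 2))
    (hdcont : ∀ p, Continuous (d p)) (hdequi : ∀ p γ f, d p (ltv _ γ f) = ltv _ γ (d p f))
    (p : ℕ) :
    Tendsto
      (fun i ↦
        ((Module.finrank (ZMod 2)
            ↥(LinearMap.ker (d p) ⊓ fixSub (Fin (k p) → ZMod 2) (H i)) : ℝ) -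
          (match p with
           | 0 => (0 : ℝ)
           | q + 1 => (Module.finrank (ZMod 2)
              ↥(Submodule.map (d q) (fixSub (Fin (k q) → ZMod 2) (H i))) : ℝ))) /
          ((H i).index : ℝ))
      l (𝓝 (bE F k d p)) := by
  have hlim q := tendsto_finrank_ker_and_map_div_index hF hH (hdcont q) (hdequi q)
  cases p with
  | zero => simpa only [bE, sub_zero] using (hlim 0).1
  | succ q => simpa only [bE, sub_div] using (hlim (q + 1)).1.sub (hlim q).2

end Approximation

/-- Approximation of entropy Betti numbers by finite covers, for
`Γ = ℤ^d`. With `Γ ⊇ Γ₁ ⊇ Γ₂ ⊇ …` finite-index subgroups intersecting in `{0}` and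
`X_i = K̃/Γ_i`, one has `b_E^p(K) = lim_i dim_{𝔽₂} H^p(X_i,𝔽₂) / [Γ : Γ_i]`, where the
cochains of `X_i` are the `Γ_i`-fixed cochains of `K̃`, so that
`dim H^p(X_i) = dim(Z^p ∩ Fix Γ_i) − dim d_{p−1}(C^{p−1} ∩ Fix Γ_i)`. -/
theorem betti_approx_finite_covers (dd : ℕ)
    (S : Finset (Multiplicative (Fin dd → ℤ)))
    (F : ℕ → Finset (Multiplicative (Fin dd → ℤ)))
    (hS : SymmGen S) (hF : FolnerSeq S F)
    (Γi : ℕ → Subgroup (Multiplicative (Fin dd → ℤ)))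
    (hdec : ∀ i, Γi (i + 1) ≤ Γi i)
    (hfin : ∀ i, (Γi i).index ≠ 0)
    (hint : (⨅ i, Γi i) = ⊥)
    (n : ℕ) (k : ℕ → ℕ) (hk : ∀ p, n < p → k p = 0)
    (d : ∀ p : ℕ, ((Multiplicative (Fin dd → ℤ)) → Fin (k p) → ZMod 2) →ₗ[ZMod 2]
      ((Multiplicative (Fin dd → ℤ)) → Fin (k (p + 1)) → ZMod 2))
    (hdcont : ∀ p, Continuous (d p))
    (hdequi : ∀ p, ∀ γ, ∀ f, d p (ltv _ γ f) = ltv _ γ (d p f))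
    (hdd : ∀ p, ∀ f, d (p + 1) (d p f) = 0)
    (p : ℕ) :
    Tendsto
      (fun i =>
        ((Module.finrank (ZMod 2)
            ↥(LinearMap.ker (d p) ⊓ fixSub (Fin (k p) → ZMod 2) (Γi i)) : ℝ) -
          (match p with
           | 0 => (0 : ℝ)
           | q + 1 => (Module.finrank (ZMod 2)
              ↥(Submodule.map (d q) (fixSub (Fin (k q) → ZMod 2) (Γi i))) : ℝ))) /
          ((Γi i).index : ℝ))
      atTop (𝓝 (bE F k d p)) := by
  have (i : ℕ) : (Γi i).FiniteIndex := ⟨hfin i⟩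
  exact betti_approx_finite_covers_general (hF.isRightFolner hS)
    (fun _ ↦ eventually_notMem_of_antitone_of_iInf_eq_bot (antitone_nat_of_succ_le hdec) hint)
    k d hdcont hdequi p
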